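/- arXiv:2411.14538 — 2 statements merged into one kernel-verified Lean document; each statement's English description precedes it below -/
import Mathlib

section
/- One-way reversible automata (1RFA) recognize strictly fewer languages than sweeping reversible automata (sRFA): every language recognized by a 1RFA is recognized by some sRFA over the same alphabet, and there exists a language (namely (aa)* ∪ {a} over the alphabet {a}) recognized by some sRFA but by no 1RFA. -/
open scoped Classical

/-- Run a partial transition function along a word. -/
def runP {A Q : Type} (d : A → Q → Option Q) (q : Q) (w : List A) : Option Q :=
  w.foldl (fun o a => o.bind (d a)) (some q)

/-- One-way reversible finite automaton (1RFA): a partial deterministic automaton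
with a single initial state and injective transition functions. -/
structure RFA (A Q : Type) where
  start : Q
  next : A → Q → Option Q
  inj : ∀ a q q' r, next a q = some r → next a q' = some r → q = q'
  accept : Set Q

def RFA.Language {A Q : Type} (M : RFA A Q) : Set (List A) :=
  {w | ∃ qf ∈ M.accept, runP M.next M.start w = some qf}

/-- A permutation automaton (1PerFA): every transition function is a totally
defined bijection. -/
def RFA.IsPerm {A Q : Type} (M : RFA A Q) : Prop :=
  (∀ a q, (M.next a q).isSome) ∧ ∀ a r, ∃ q, M.next a q = some r

/-- One-way reversible finite automaton with multiple initial states (MRFA). -/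
structure MRFA (A Q : Type) where
  init : Set Q
  next : A → Q → Option Q
  inj : ∀ a q q' r, next a q = some r → next a q' = some r → q = q'
  accept : Set Q

def MRFA.Language {A Q : Type} (M : MRFA A Q) : Set (List A) :=
  {w | ∃ q0 ∈ M.init, ∃ qf ∈ M.accept, runP M.next q0 w = some qf}

def Rec1RFA (A : Type) (L : Set (List A)) : Prop :=
  ∃ (Q : Type) (_ : Fintype Q) (M : RFA A Q), M.Language = L

def Rec1RFA1 (A : Type) (L : Set (List A)) : Prop :=
  ∃ (Q : Type) (_ : Fintype Q) (M : RFA A Q), M.accept.ncard = 1 ∧ M.Language = L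

def Rec1PerFA (A : Type) (L : Set (List A)) : Prop :=
  ∃ (Q : Type) (_ : Fintype Q) (M : RFA A Q), M.IsPerm ∧ M.Language = L

def Rec1PerFA1 (A : Type) (L : Set (List A)) : Prop :=
  ∃ (Q : Type) (_ : Fintype Q) (M : RFA A Q),
    M.IsPerm ∧ M.accept.ncard = 1 ∧ M.Language = L

def RecMRFA (A : Type) (L : Set (List A)) : Prop :=
  ∃ (Q : Type) (_ : Fintype Q) (M : MRFA A Q), M.Language = L

/-- Sweeping reversible automaton (sRFA), given without its accepting set:
states `Qp` move rightwards, states `Qm` move leftwards; `startT` is the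
transition of the left end-marker function on the initial state, `turnL` its
restriction to `Qm`, and `turnR` is the transition function at the right
end-marker.  All transition functions are partial and injective, and the left
end-marker function is injective on the whole of `{q₀} ∪ Q₋`. -/
structure SRFA (A Qp Qm : Type) where
  start : Qp
  nextP : A → Qp → Option Qp
  nextM : A → Qm → Option Qm
  startT : Option Qp
  turnL : Qm → Option Qp
  turnR : Qp → Option Qm
  injP : ∀ a q q' r, nextP a q = some r → nextP a q' = some r → q = q'
  injM : ∀ a q q' r, nextM a q = some r → nextM a q' = some r → q = q'
  injL : ∀ q q' r, turnL q = some r → turnL q' = some r → q = q'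
  injR : ∀ q q' r, turnR q = some r → turnR q' = some r → q = q'
  startT_ne_turnL : ∀ q r, startT = some r → turnL q ≠ some r

/-- One step of a sweeping automaton on input `⊢w⊣`: a configuration is a state
together with a head position in `{0, 1, …, |w| + 1}`, where position `0` is the
left end-marker, position `i` with `1 ≤ i ≤ |w|` carries the `i`-th input
symbol, and position `|w| + 1` is the right end-marker.  The result is `none`
when the corresponding transition is undefined and the computation halts. -/
noncomputable def SRFA.step {A Qp Qm : Type} (M : SRFA A Qp Qm) (w : List A) :
    (Qp ⊕ Qm) × ℕ → Option ((Qp ⊕ Qm) × ℕ)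
  | (Sum.inl q, i) =>
      if i = 0 then
        if q = M.start then M.startT.map (fun p => (Sum.inl p, 1)) else none
      else if i = w.length + 1 then
        (M.turnR q).map (fun r => (Sum.inr r, w.length))
      else
        (w[i - 1]?.bind (fun a => M.nextP a q)).map (fun p => (Sum.inl p, i + 1))
  | (Sum.inr q, i) =>
      if i = 0 then (M.turnL q).map (fun p => (Sum.inl p, 1))
      else if i = w.length + 1 then none
      else (w[i - 1]?.bind (fun a => M.nextM a q)).map (fun r => (Sum.inr r, i - 1))

/-- The configuration reached after `n` steps of the computation on `w`,
starting in the initial state at the left end-marker (or `none` if the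
computation has halted before). -/
noncomputable def SRFA.steps {A Qp Qm : Type} (M : SRFA A Qp Qm) (w : List A) :
    ℕ → Option ((Qp ⊕ Qm) × ℕ)
  | 0 => some (Sum.inl M.start, 0)
  | n + 1 => (M.steps w n).bind (M.step w)

/-- Acceptance of an ordinary sRFA: the computation halts at the right
end-marker in an accepting state `q ∈ F ⊆ Q₊`. -/
def SRFA.AcceptsR {A Qp Qm : Type} (M : SRFA A Qp Qm) (F : Set Qp) (w : List A) : Prop :=
  ∃ n q, M.steps w n = some (Sum.inl q, w.length + 1) ∧ q ∈ F ∧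
    M.step w (Sum.inl q, w.length + 1) = none

def SRFA.LangR {A Qp Qm : Type} (M : SRFA A Qp Qm) (F : Set Qp) : Set (List A) :=
  {w | M.AcceptsR F w}

/-- Acceptance of an sRFA with acceptance at both sides: the computation halts
at either end-marker in an accepting state `c ∈ F ⊆ Q₊ ∪ Q₋`. -/
def SRFA.AcceptsB {A Qp Qm : Type} (M : SRFA A Qp Qm) (F : Set (Qp ⊕ Qm)) (w : List A) : Prop :=
  ∃ n c i, M.steps w n = some (c, i) ∧ c ∈ F ∧ (i = 0 ∨ i = w.length + 1) ∧
    M.step w (c, i) = none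

def SRFA.LangB {A Qp Qm : Type} (M : SRFA A Qp Qm) (F : Set (Qp ⊕ Qm)) : Set (List A) :=
  {w | M.AcceptsB F w}

def RecSRFA (A : Type) (L : Set (List A)) : Prop :=
  ∃ (Qp Qm : Type) (_ : Fintype Qp) (_ : Fintype Qm) (M : SRFA A Qp Qm) (F : Set Qp),
    M.LangR F = L

/-- The unary language `(aa)* ∪ {a}`. -/
def LevenOrA : Set (List Unit) := {w | w.length % 2 = 0 ∨ w = [()]}

/-- A right sweep: during the first pass over `w` the automaton runs `nextP`. -/
theorem SRFA.steps_first_sweep {A Qp Qm : Type} (M : SRFA A Qp Qm) (w : List A) (i : ℕ)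
    (hi : i ≤ w.length) :
    M.steps w (i + 1) =
      (M.startT.bind fun p => runP M.nextP p (w.take i)).map fun q => (Sum.inl q, i + 1) := by
  induction i with
  | zero => cases h : M.startT <;> simp [SRFA.steps, SRFA.step, runP, h]
  | succ i ih =>
    rw [SRFA.steps, ih (by omega)]
    have hlt : i < w.length := hi
    cases M.startT with
    | none => rfl
    | some p =>
      have hrun : runP M.nextP p (w.take (i + 1)) =
          (runP M.nextP p (w.take i)).bind (M.nextP w[i]) := by
        rw [List.take_add_one, List.getElem?_eq_getElem hlt]
        simp only [runP, Option.toList_some, List.foldl_append, List.foldl_cons, List.foldl_nil]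
      simp only [Option.bind_some, hrun]
      cases runP M.nextP p (w.take i) with
      | none => rfl
      | some q => simp [SRFA.step, hlt, hlt.ne]

theorem SRFA.steps_eq_none_of_le {A Qp Qm : Type} (M : SRFA A Qp Qm) (w : List A) {m n : ℕ}
    (hmn : m ≤ n) (hm : M.steps w m = none) : M.steps w n = none := by
  induction n, hmn using Nat.le_induction with
  | base => exact hm
  | succ n _ ih => simp [SRFA.steps, ih]

/-- The automaton cannot be at the right end-marker before finishing the first sweep. -/
theorem SRFA.length_lt_of_steps_eq {A Qp Qm : Type} (M : SRFA A Qp Qm) (w : List A) {n : ℕ}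
    {q : Qp} (h : M.steps w n = some (Sum.inl q, w.length + 1)) : w.length < n := by
  by_contra! hn
  cases n with
  | zero => simp [SRFA.steps] at h
  | succ i =>
    rw [M.steps_first_sweep w i (by omega)] at h
    simp only [Option.map_eq_some_iff, Prod.mk.injEq] at h
    obtain ⟨_, _, _, h⟩ := h
    omega

/-- A one-way reversible automaton, seen as a sweeping one that makes a single sweep. -/
def RFA.toSRFA {A Q : Type} (M : RFA A Q) : SRFA A Q Empty where
  start := M.start
  nextP := M.next
  nextM := fun _ q => q.elim
  startT := some M.start
  turnL := Empty.elim
  turnR := fun _ => none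
  injP := M.inj
  injM := fun _ q => q.elim
  injL := fun q => q.elim
  injR := by simp
  startT_ne_turnL := fun q => q.elim

theorem RFA.langR_toSRFA {A Q : Type} (M : RFA A Q) : M.toSRFA.LangR M.accept = M.Language := by
  ext w
  have hsweep : M.toSRFA.steps w (w.length + 1) =
      (runP M.next M.start w).map fun q => (Sum.inl q, w.length + 1) := by
    simpa [RFA.toSRFA] using M.toSRFA.steps_first_sweep w w.length le_rfl
  have hhalt (q : Q) : M.toSRFA.step w (Sum.inl q, w.length + 1) = none := by
    simp [SRFA.step, RFA.toSRFA]
  constructor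
  · rintro ⟨n, q, hn, hq, -⟩
    have hlt := M.toSRFA.length_lt_of_steps_eq w hn
    obtain rfl | hgt := eq_or_lt_of_le (Nat.succ_le_of_lt hlt)
    · refine ⟨q, hq, ?_⟩
      rw [Nat.succ_eq_add_one, hsweep] at hn
      simpa using hn
    · have hnone : M.toSRFA.steps w (w.length + 1 + 1) = none := by
        rw [SRFA.steps, hsweep]
        cases runP M.next M.start w with
        | none => rfl
        | some q => exact hhalt q
      rw [M.toSRFA.steps_eq_none_of_le w hgt hnone] at hn
      cases hn
  · rintro ⟨q, hq, hrun⟩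
    exact ⟨w.length + 1, q, by rw [hsweep, hrun]; rfl, hq, hhalt q⟩

/-- A sweeping automaton for `(aa)* ∪ {a}`. The first sweep computes the parity on the cycle
`{0, 1}`; on odd length the left sweep follows the path `false → true`, which succeeds only on
length one, and the last sweep follows the path `2 → 3`. -/
def evenOrASRFA : SRFA Unit (Fin 4) Bool where
  start := 0
  nextP := fun _ => ![some 1, some 0, some 3, none]
  nextM := fun _ b => bif b then none else some true
  startT := some 0
  turnL := fun b => bif b then some 2 else none
  turnR := ![none, some false, none, none]
  injP := by decide
  injM := by decide
  injL := by decide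
  injR := by decide
  startT_ne_turnL := by decide

theorem runP_evenOrASRFA (w : List Unit) :
    runP evenOrASRFA.nextP 0 w = some (if w.length % 2 = 0 then 0 else 1) := by
  induction w using List.reverseRecOn with
  | nil => rfl
  | append_singleton w a ih =>
    have hstep : runP evenOrASRFA.nextP 0 (w ++ [a]) =
        (runP evenOrASRFA.nextP 0 w).bind (evenOrASRFA.nextP a) := by simp [runP]
    rw [hstep, ih, List.length_append, List.length_singleton]
    rcases Nat.mod_two_eq_zero_or_one w.length with h | h
    · have h' : (w.length + 1) % 2 = 1 := by omega
      simp [h, h', evenOrASRFA]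
    · have h' : (w.length + 1) % 2 = 0 := by omega
      simp [h, h', evenOrASRFA]

theorem steps_evenOrASRFA (w : List Unit) :
    evenOrASRFA.steps w (w.length + 1) =
      some (Sum.inl (if w.length % 2 = 0 then 0 else 1), w.length + 1) := by
  have h := evenOrASRFA.steps_first_sweep w w.length le_rfl
  have hs : evenOrASRFA.startT = some 0 := rfl
  rw [hs, List.take_length, Option.bind_some, runP_evenOrASRFA] at h
  exact h

theorem langR_evenOrASRFA : evenOrASRFA.LangR {0, 3} = LevenOrA := by
  ext w
  constructor
  · rintro ⟨n, q, hn, hq, -⟩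
    by_contra hw
    obtain ⟨hodd, hne⟩ := not_or.mp hw
    have hlen : w.length ≠ 1 := fun h => hne (by
      obtain ⟨a, rfl⟩ := List.length_eq_one_iff.mp h
      rfl)
    have hlt := evenOrASRFA.length_lt_of_steps_eq w hn
    obtain ⟨k, hk⟩ : ∃ k, w.length = k + 2 := ⟨w.length - 2, by omega⟩
    have h₁ := steps_evenOrASRFA w
    rw [if_neg hodd] at h₁
    have h₂ : evenOrASRFA.steps w (w.length + 2) = some (Sum.inr false, w.length) := by
      rw [SRFA.steps, h₁]
      simp [SRFA.step, evenOrASRFA]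
    have h₃ : evenOrASRFA.steps w (w.length + 3) = some (Sum.inr true, k + 1) := by
      rw [SRFA.steps, h₂]
      simp [SRFA.step, evenOrASRFA, hk]
    have h₄ : evenOrASRFA.steps w (w.length + 4) = none := by
      rw [SRFA.steps, h₃]
      simp [SRFA.step, evenOrASRFA, hk]
    rcases (by omega : n = w.length + 1 ∨ n = w.length + 2 ∨ n = w.length + 3 ∨
      w.length + 4 ≤ n) with rfl | rfl | rfl | hge
    · rw [h₁] at hn
      simp only [Option.some.injEq, Prod.mk.injEq, Sum.inl.injEq, and_true] at hn
      subst hn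
      simp at hq
    · simp [h₂] at hn
    · simp [h₃] at hn
    · simp [evenOrASRFA.steps_eq_none_of_le w hge h₄] at hn
  · rintro (heven | rfl)
    · refine ⟨w.length + 1, 0, ?_, by simp, by simp [SRFA.step, evenOrASRFA]⟩
      rw [steps_evenOrASRFA, if_pos heven]
    · exact ⟨6, 3, by simp [SRFA.steps, SRFA.step, evenOrASRFA], by simp,
        by simp [SRFA.step, evenOrASRFA]⟩

theorem runP_replicate_succ {A Q : Type} (d : A → Q → Option Q) (q : Q) (a : A) (n : ℕ) :
    runP d q (List.replicate (n + 1) a) = (runP d q (List.replicate n a)).bind (d a) := by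
  simp [runP, List.replicate_succ']

/-- If reading any power of `a` is defined, then the orbit of the start state under `a` is a
cycle. -/
theorem RFA.exists_period {A Q : Type} [Finite Q] (M : RFA A Q) (a : A)
    (hdef : ∀ n, ∃ q, runP M.next M.start (List.replicate n a) = some q) :
    ∃ p, 0 < p ∧ ∀ n, runP M.next M.start (List.replicate (n + p) a) =
      runP M.next M.start (List.replicate n a) := by
  choose s hs using hdef
  have hsucc (n : ℕ) : M.next a (s n) = some (s (n + 1)) := by
    rw [← hs (n + 1), runP_replicate_succ, hs n, Option.bind_some]
  have hback (p i : ℕ) (h : s i = s (i + p)) : s 0 = s p := by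
    induction i with
    | zero => simpa using h
    | succ i ih =>
      refine ih (M.inj a _ _ _ (hsucc i) ?_)
      rw [hsucc, h, Nat.add_right_comm]
  obtain ⟨i, j, hne, hij⟩ := Finite.exists_ne_map_eq_of_infinite s
  wlog hlt : i < j generalizing i j
  · exact this j i hne.symm hij.symm (by omega)
  obtain ⟨p, rfl⟩ := Nat.exists_eq_add_of_lt hlt
  have h0 : s 0 = s (p + 1) := hback (p + 1) i (by rw [hij, add_assoc])
  refine ⟨p + 1, p.succ_pos, fun n => ?_⟩
  induction n with
  | zero => rw [zero_add, hs, hs, h0]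
  | succ n ih => rw [Nat.add_right_comm, runP_replicate_succ, ih, runP_replicate_succ]

theorem not_rec1RFA_levenOrA : ¬ Rec1RFA Unit LevenOrA := by
  rintro ⟨Q, _, M, hM⟩
  have hmem (n : ℕ) : List.replicate n () ∈ M.Language ↔ n % 2 = 0 ∨ n = 1 := by
    rw [hM]
    simp only [LevenOrA, Set.mem_ofPred_eq, List.length_replicate]
    refine or_congr_right ⟨fun h => by simpa using congrArg List.length h, ?_⟩
    rintro rfl
    rfl
  have hdef (n : ℕ) : ∃ q, runP M.next M.start (List.replicate n ()) = some q := by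
    obtain ⟨q, -, hq⟩ := (hmem (n + n)).mpr (Or.inl (by omega))
    cases h : runP M.next M.start (List.replicate n ()) with
    | some q => exact ⟨q, rfl⟩
    | none =>
      have hnone (k : ℕ) : runP M.next M.start (List.replicate (n + k) ()) = none := by
        induction k with
        | zero => exact h
        | succ k ih => rw [← add_assoc, runP_replicate_succ, ih, Option.bind_none]
      simp [hnone] at hq
  obtain ⟨p, hp, hper⟩ := M.exists_period () hdef
  obtain ⟨q, hq, hrun⟩ := (hmem 1).mpr (Or.inr rfl)
  have hacc : List.replicate (1 + p + p) () ∈ M.Language := ⟨q, hq, by rw [hper, hper, hrun]⟩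
  have := (hmem _).mp hacc
  omega

/-- 1RFA recognize strictly fewer languages than sRFA: every 1RFA
language is an sRFA language over the same alphabet, and `(aa)* ∪ {a}` is an
sRFA language which is not a 1RFA language. -/
theorem stmt9 :
    (∀ (A : Type) (L : Set (List A)), Rec1RFA A L → RecSRFA A L) ∧
    RecSRFA Unit LevenOrA ∧ ¬ Rec1RFA Unit LevenOrA := by
  refine ⟨?_, ⟨Fin 4, Bool, inferInstance, inferInstance, evenOrASRFA, {0, 3},
    langR_evenOrASRFA⟩, not_rec1RFA_levenOrA⟩
  rintro A _ ⟨Q, hQ, M, rfl⟩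
  exact ⟨Q, Empty, hQ, inferInstance, M.toSRFA, M.accept, M.langR_toSRFA⟩
end

section
/- Every sweeping reversible automaton (sRFA) with state sets P₊ and P₋ can be transformed to a one-way reversible automaton with multiple initial states (MRFA) recognizing the same language, whose set of states is Q = { (p, f) : p ∈ P₊, f is a partial injective function from P₋ to P₊, and p ∉ Im f }. -/
open scoped Classical

/-- The state set `{(p, f) : p ∈ P₊, f a partial injective function P₋ ⇀ P₊,
p ∉ Im f}` of the MRFA constructed from a sweeping automaton. -/
def GoodState (Pp Pm : Type) : Type :=
  {pf : Pp × (Pm → Option Pp) //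
    (∀ q q' r, pf.2 q = some r → pf.2 q' = some r → q = q') ∧
    ∀ q, pf.2 q ≠ some pf.1}

section RunP

variable {A Q : Type} (d : A → Q → Option Q)

theorem runP_nil (q : Q) : runP d q [] = some q := rfl

theorem foldl_bind_none (w : List A) :
    w.foldl (fun (o : Option Q) a => o.bind (d a)) none = none := by
  induction w with
  | nil => rfl
  | cons a w ih => simpa using ih

theorem runP_cons (q : Q) (a : A) (w : List A) :
    runP d q (a :: w) = (d a q).bind fun r => runP d r w := by
  cases h : d a q with
  | none => simp [runP, h, foldl_bind_none]
  | some r => simp [runP, h]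

theorem runP_concat (q : Q) (u : List A) (a : A) :
    runP d q (u ++ [a]) = (runP d q u).bind (d a) := by
  simp [runP, List.foldl_append]

theorem runP_injective (hd : ∀ a q q' r, d a q = some r → d a q' = some r → q = q')
    (w : List A) (q q' r : Q) (h : runP d q w = some r) (h' : runP d q' w = some r) :
    q = q' := by
  induction w generalizing q q' with
  | nil => simp_all [runP_nil]
  | cons a w ih =>
    simp only [runP_cons, Option.bind_eq_some_iff] at h h'
    obtain ⟨x, hx, hxr⟩ := h
    obtain ⟨y, hy, hyr⟩ := h'
    obtain rfl := ih x y hxr hyr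
    exact hd a q q' x hx hy

end RunP

namespace SRFA

variable {A Pp Pm : Type} (M : SRFA A Pp Pm)

/-- A rightward sweep over the word `w`. -/
def sweepRight (w : List A) (p : Pp) : Option Pp := runP M.nextP p w

/-- A leftward sweep over the word `w`. -/
def sweepLeft (w : List A) (q : Pm) : Option Pm := runP M.nextM q w.reverse

theorem sweepRight_cons (a : A) (w : List A) (p : Pp) :
    M.sweepRight (a :: w) p = (M.nextP a p).bind (M.sweepRight w) :=
  runP_cons _ _ _ _

theorem sweepRight_concat (w : List A) (a : A) (p : Pp) :
    M.sweepRight (w ++ [a]) p = (M.sweepRight w p).bind (M.nextP a) :=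
  runP_concat _ _ _ _

theorem sweepLeft_cons (a : A) (w : List A) (q : Pm) :
    M.sweepLeft (a :: w) q = (M.sweepLeft w q).bind (M.nextM a) := by
  simp [sweepLeft, runP_concat]

theorem sweepRight_injective (w : List A) (p p' r : Pp)
    (h : M.sweepRight w p = some r) (h' : M.sweepRight w p' = some r) : p = p' :=
  runP_injective _ M.injP w p p' r h h'

theorem sweepLeft_injective (w : List A) (q q' r : Pm)
    (h : M.sweepLeft w q = some r) (h' : M.sweepLeft w q' = some r) : q = q' :=
  runP_injective _ M.injM _ q q' r h h'

/-- The states `(p, f)` and `(p', f')` are linked by `w` if sweeping over `w` leads from `p` to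
`p'`, and if every pair of `f` extends along `w` to a pair of `f'` and every pair of `f'` arises
in this way. -/
def Linked (w : List A) (s t : GoodState Pp Pm) : Prop :=
  M.sweepRight w s.1.1 = some t.1.1 ∧
  (∀ q r, s.1.2 q = some r → ∃ q' r', M.sweepLeft w q' = some q ∧
    M.sweepRight w r = some r' ∧ t.1.2 q' = some r') ∧
  ∀ q' r', t.1.2 q' = some r' → ∃ q r, M.sweepLeft w q' = some q ∧
    M.sweepRight w r = some r' ∧ s.1.2 q = some r

variable {M}

theorem Linked.left_unique {w : List A} {s s' t : GoodState Pp Pm}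
    (h : M.Linked w s t) (h' : M.Linked w s' t) : s = s' := by
  have key : ∀ {s s'}, M.Linked w s t → M.Linked w s' t →
      ∀ q r, s.1.2 q = some r → s'.1.2 q = some r := by
    intro s s' h h' q r hqr
    obtain ⟨q', r', h1, h2, h3⟩ := h.2.1 q r hqr
    obtain ⟨x, y, h4, h5, h6⟩ := h'.2.2 q' r' h3
    obtain rfl : q = x := by simpa [h1] using h4
    obtain rfl := M.sweepRight_injective w _ _ _ h2 h5
    exact h6
  refine Subtype.ext (Prod.ext (M.sweepRight_injective w _ _ _ h.1 h'.1) ?_)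
  funext q
  exact Option.ext fun r => ⟨key h h' q r, key h' h q r⟩

theorem Linked.right_unique {w : List A} {s t t' : GoodState Pp Pm}
    (h : M.Linked w s t) (h' : M.Linked w s t') : t = t' := by
  have key : ∀ {t t'}, M.Linked w s t → M.Linked w s t' →
      ∀ q r, t.1.2 q = some r → t'.1.2 q = some r := by
    intro t t' h h' q r hqr
    obtain ⟨x, y, h1, h2, h3⟩ := h.2.2 q r hqr
    obtain ⟨q', r', h4, h5, h6⟩ := h'.2.1 x y h3
    obtain rfl := M.sweepLeft_injective w _ _ _ h1 h4
    obtain rfl : r = r' := by simpa [h2] using h5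
    exact h6
  refine Subtype.ext (Prod.ext (Option.some.inj (h.1.symm.trans h'.1)) ?_)
  funext q
  exact Option.ext fun r => ⟨key h h' q r, key h' h q r⟩

theorem linked_nil_iff {s t : GoodState Pp Pm} : M.Linked [] s t ↔ s = t := by
  have refl : ∀ s : GoodState Pp Pm, M.Linked [] s s := fun s =>
    ⟨rfl, fun q r h => ⟨q, r, rfl, rfl, h⟩, fun q r h => ⟨q, r, rfl, rfl, h⟩⟩
  exact ⟨fun h => (refl s).right_unique h, fun h => h ▸ refl s⟩

theorem linked_cons_iff {a : A} {w : List A} {s t : GoodState Pp Pm} :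
    M.Linked (a :: w) s t ↔ ∃ m, M.Linked [a] s m ∧ M.Linked w m t := by
  simp only [Linked, sweepRight_cons, sweepLeft_cons, Option.bind_eq_some_iff]
  have hR : ∀ p, M.sweepRight [] p = some p := fun _ => rfl
  have hL : ∀ q, M.sweepLeft [] q = some q := fun _ => rfl
  simp only [hR, hL, Option.some.injEq, exists_eq_left', exists_eq_right]
  constructor
  · rintro ⟨⟨p, hp, hpt⟩, hext, horig⟩
    have hm : ∀ q r, (((M.nextM a q).bind s.1.2).bind (M.nextP a)) = some r ↔
        ∃ x y, M.nextM a q = some x ∧ s.1.2 x = some y ∧ M.nextP a y = some r := by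
      intro q r
      simp only [Option.bind_eq_some_iff]
      tauto
    refine ⟨⟨(p, fun q => ((M.nextM a q).bind s.1.2).bind (M.nextP a)), ?_, ?_⟩,
      ⟨hp, ?_, ?_⟩, hpt, ?_, ?_⟩
    · intro q q' r h h'
      obtain ⟨x, y, h1, h2, h3⟩ := (hm q r).1 h
      obtain ⟨x', y', h1', h2', h3'⟩ := (hm q' r).1 h'
      obtain rfl := M.injP a _ _ _ h3 h3'
      obtain rfl := s.2.1 _ _ _ h2 h2'
      exact M.injM a _ _ _ h1 h1'
    · intro q h
      obtain ⟨x, y, h1, h2, h3⟩ := (hm q p).1 h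
      obtain rfl := M.injP a _ _ _ h3 hp
      exact s.2.2 x h2
    · intro q r h
      obtain ⟨q', r', ⟨x, -, hx⟩, ⟨y, hy, -⟩, -⟩ := hext q r h
      exact ⟨x, y, hx, hy, (hm x y).2 ⟨q, r, hx, h, hy⟩⟩
    · intro q r h
      obtain ⟨x, y, h1, h2, h3⟩ := (hm q r).1 h
      exact ⟨x, y, h1, h3, h2⟩
    · intro q r h
      obtain ⟨x, y, h1, h2, h3⟩ := (hm q r).1 h
      obtain ⟨q', r', ⟨z, hz, hzx⟩, ⟨z', hz', hzr⟩, ht⟩ := hext x y h2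
      obtain rfl := M.injM a _ _ _ h1 hzx
      obtain rfl : r = z' := by simpa [h3] using hz'
      exact ⟨q', r', hz, hzr, ht⟩
    · intro q r h
      obtain ⟨x, y, ⟨z, hz, hzx⟩, ⟨z', hz', hzr⟩, hs⟩ := horig q r h
      exact ⟨z, z', hz, hzr, (hm z z').2 ⟨x, y, hzx, hs, hz'⟩⟩
  · rintro ⟨m, ⟨hp, hext, horig⟩, hp', hext', horig'⟩
    refine ⟨⟨_, hp, hp'⟩, fun q r h => ?_, fun q r h => ?_⟩
    · obtain ⟨x, y, h1, h2, h3⟩ := hext q r h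
      obtain ⟨q', r', h4, h5, h6⟩ := hext' x y h3
      exact ⟨q', r', ⟨x, h4, h1⟩, ⟨y, h2, h5⟩, h6⟩
    · obtain ⟨x, y, h1, h2, h3⟩ := horig' q r h
      obtain ⟨q', r', h4, h5, h6⟩ := horig x y h3
      exact ⟨q', r', ⟨x, h1, h4⟩, ⟨y, h5, h2⟩, h6⟩

variable (M)

/-- One round trip from the right end-marker to the left one and back. -/
def loop (w : List A) (q : Pm) : Option Pp :=
  ((M.sweepLeft w q).bind M.turnL).bind (M.sweepRight w)

theorem loop_eq_some_iff {w : List A} {q : Pm} {r : Pp} :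
    M.loop w q = some r ↔ ∃ x y, M.sweepLeft w q = some x ∧ M.turnL x = some y ∧
      M.sweepRight w y = some r := by
  simp only [loop, Option.bind_eq_some_iff]
  tauto

/-- Arrivals at the right end-marker, given the first arrival `p` and the behaviour `f` of the
automaton to the left of the end-marker. -/
def Arrives (p : Pp) (f : Pm → Option Pp) : Pp → Prop :=
  Relation.ReflTransGen (fun x y => ∃ q, M.turnR x = some q ∧ f q = some y) p

/-- The one-way automaton simulating a sweeping automaton: in a state `(p, f)`, `p` is the
state of the first crossing of the current position, and `f` is a guessed part of the behaviour
on the prefix read so far, none of whose pairs may be forgotten afterwards. -/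
noncomputable def toMRFA (F : Set Pp) : MRFA A (GoodState Pp Pm) where
  init := {s | M.startT = some s.1.1 ∧ ∀ q r, s.1.2 q = some r → M.turnL q = some r}
  next a s := if h : ∃ t, M.Linked [a] s t then some h.choose else none
  inj a s s' t h h' := by
    split_ifs at h h' with hs hs'
    have e := hs.choose_spec
    have e' := hs'.choose_spec
    rw [Option.some.inj h] at e
    rw [Option.some.inj h'] at e'
    exact e.left_unique e'
  accept := {t | ∃ z ∈ F, M.turnR z = none ∧ M.Arrives t.1.1 t.1.2 z}

theorem toMRFA_next_eq_some_iff (F : Set Pp) {a : A} {s t : GoodState Pp Pm} :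
    (M.toMRFA F).next a s = some t ↔ M.Linked [a] s t := by
  simp only [toMRFA]
  split_ifs with h
  · rw [Option.some.injEq]
    exact ⟨fun e => e ▸ h.choose_spec, fun e => h.choose_spec.right_unique e⟩
  · simpa using fun e => h ⟨t, e⟩

theorem runP_toMRFA_eq_some_iff (F : Set Pp) {w : List A} {s t : GoodState Pp Pm} :
    runP (M.toMRFA F).next s w = some t ↔ M.Linked w s t := by
  induction w generalizing s with
  | nil => rw [runP_nil, linked_nil_iff, Option.some.injEq]
  | cons a w ih =>
    simp only [runP_cons, Option.bind_eq_some_iff, linked_cons_iff (w := w),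
      toMRFA_next_eq_some_iff, ih]

/-- Reachability between configurations on the input `w`. -/
def Reach (w : List A) : (Pp ⊕ Pm) × ℕ → (Pp ⊕ Pm) × ℕ → Prop :=
  Relation.ReflTransGen fun c c' => M.step w c = some c'

theorem exists_steps_eq_some_iff {w : List A} {c : (Pp ⊕ Pm) × ℕ} :
    (∃ n, M.steps w n = some c) ↔ M.Reach w (Sum.inl M.start, 0) c := by
  constructor
  · rintro ⟨n, hn⟩
    induction n generalizing c with
    | zero =>
      obtain rfl := Option.some.inj hn
      exact Relation.ReflTransGen.refl
    | succ n ih =>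
      obtain ⟨b, hb, hbc⟩ := Option.bind_eq_some_iff.1 hn
      exact (ih hb).tail hbc
  · intro h
    induction h with
    | refl => exact ⟨0, rfl⟩
    | tail _ hbc ih =>
      obtain ⟨n, hn⟩ := ih
      exact ⟨n + 1, Option.bind_eq_some_iff.2 ⟨_, hn, hbc⟩⟩

theorem step_start (w : List A) :
    M.step w (Sum.inl M.start, 0) = M.startT.map fun p => (Sum.inl p, 1) := by
  simp [step]

theorem step_inr_zero (w : List A) (q : Pm) :
    M.step w (Sum.inr q, 0) = (M.turnL q).map fun p => (Sum.inl p, 1) := by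
  simp [step]

theorem step_inl_end (w : List A) (p : Pp) :
    M.step w (Sum.inl p, w.length + 1) =
      (M.turnR p).map fun r => (Sum.inr r, w.length) := by
  simp [step]

theorem step_inl_append (u v : List A) (a : A) (p : Pp) :
    M.step (u ++ a :: v) (Sum.inl p, u.length + 1) =
      (M.nextP a p).map fun r => (Sum.inl r, u.length + 2) := by
  simp [step]

theorem step_inr_append (u v : List A) (a : A) (q : Pm) :
    M.step (u ++ a :: v) (Sum.inr q, u.length + 1) =
      (M.nextM a q).map fun r => (Sum.inr r, u.length) := by
  simp [step]

variable {M}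

theorem reach_of_sweepRight {u v : List A} {p p' : Pp} (h : M.sweepRight u p = some p') :
    M.Reach (u ++ v) (Sum.inl p, 1) (Sum.inl p', u.length + 1) := by
  induction u using List.reverseRecOn generalizing v p' with
  | nil =>
    obtain rfl : p = p' := Option.some.inj h
    exact Relation.ReflTransGen.refl
  | append_singleton u a ih =>
    obtain ⟨x, hx, hxp⟩ := Option.bind_eq_some_iff.1 ((M.sweepRight_concat u a p).symm.trans h)
    have := ih (v := a :: v) hx
    rw [List.append_assoc, List.singleton_append]
    refine this.tail ?_
    simp [step_inl_append, hxp]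

theorem reach_of_sweepLeft {u v : List A} {q q' : Pm} (h : M.sweepLeft v q = some q') :
    M.Reach (u ++ v) (Sum.inr q, (u ++ v).length) (Sum.inr q', u.length) := by
  induction v generalizing u q' with
  | nil =>
    obtain rfl : q = q' := Option.some.inj h
    rw [List.append_nil]
    exact Relation.ReflTransGen.refl
  | cons a v ih =>
    obtain ⟨x, hx, hxq⟩ := Option.bind_eq_some_iff.1 ((M.sweepLeft_cons a v q).symm.trans h)
    have := ih (u := u ++ [a]) hx
    rw [List.append_assoc, List.singleton_append, List.length_append (as := u) (bs := [a])] at this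
    refine this.tail ?_
    simp [step_inr_append, hxq]

theorem reach_of_startT {w : List A} {p p' : Pp} (h : M.startT = some p)
    (h' : M.sweepRight w p = some p') :
    M.Reach w (Sum.inl M.start, 0) (Sum.inl p', w.length + 1) := by
  have hw := reach_of_sweepRight (v := []) h'
  rw [List.append_nil] at hw
  exact hw.head (by simp [step_start, h])

theorem reach_of_loop {w : List A} {p p' : Pp} {q : Pm} (h : M.turnR p = some q)
    (h' : M.loop w q = some p') :
    M.Reach w (Sum.inl p, w.length + 1) (Sum.inl p', w.length + 1) := by
  obtain ⟨x, y, h1, h2, h3⟩ := M.loop_eq_some_iff.1 h'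
  have hR := reach_of_sweepRight (v := []) h3
  rw [List.append_nil] at hR
  have hL := reach_of_sweepLeft (u := []) h1
  exact ((hL.head (by simp [step_inl_end, h])).tail (by simp [step_inr_zero, h2])).trans hR

variable (M)

/-- States in which the automaton arrives at the right end-marker on the input `w`. -/
def AtRight (w : List A) (z : Pp) : Prop :=
  ∃ y p, M.startT = some y ∧ M.sweepRight w y = some p ∧ M.Arrives p (M.loop w) z

/-- States in which the automaton leaves the left end-marker on the input `w`. -/
def LeavesLeft (w : List A) (y : Pp) : Prop :=
  M.startT = some y ∨ ∃ z q x, M.AtRight w z ∧ M.turnR z = some q ∧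
    M.sweepLeft w q = some x ∧ M.turnL x = some y

/-- An invariant of the configurations on the input `w`. -/
def Visited (w : List A) : (Pp ⊕ Pm) × ℕ → Prop
  | (Sum.inl p, 0) => p = M.start
  | (Sum.inl p, i + 1) => ∃ u v y, w = u ++ v ∧ i = u.length ∧ M.LeavesLeft w y ∧
      M.sweepRight u y = some p
  | (Sum.inr q, i) => ∃ u v z r, w = u ++ v ∧ i = u.length ∧ M.AtRight w z ∧
      M.turnR z = some r ∧ M.sweepLeft v r = some q

variable {M}

theorem LeavesLeft.atRight {w : List A} {y z : Pp} (h : M.LeavesLeft w y)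
    (hz : M.sweepRight w y = some z) : M.AtRight w z := by
  rcases h with h | ⟨x, q, r, ⟨y', p, hy', hp, hx⟩, hq, hr, hy⟩
  · exact ⟨y, z, h, hz, Relation.ReflTransGen.refl⟩
  · exact ⟨y', p, hy', hp, hx.tail ⟨q, hq, M.loop_eq_some_iff.2 ⟨r, y, hr, hy, hz⟩⟩⟩

theorem LeavesLeft.visited {w : List A} {y : Pp} (h : M.LeavesLeft w y) :
    M.Visited w (Sum.inl y, 1) :=
  ⟨[], w, y, rfl, rfl, h, rfl⟩

theorem Visited.step {w : List A} {c c' : (Pp ⊕ Pm) × ℕ} (h : M.Visited w c)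
    (hc : M.step w c = some c') : M.Visited w c' := by
  rcases c with ⟨p | q, i⟩
  · cases i with
    | zero =>
      obtain rfl : p = M.start := h
      rw [step_start, Option.map_eq_some_iff] at hc
      obtain ⟨y, hy, rfl⟩ := hc
      exact LeavesLeft.visited (Or.inl hy)
    | succ i =>
      obtain ⟨u, v, y, rfl, rfl, hy, hp⟩ := h
      cases v with
      | nil =>
        rw [List.append_nil] at hc hy ⊢
        rw [step_inl_end, Option.map_eq_some_iff] at hc
        obtain ⟨r, hr, rfl⟩ := hc
        exact ⟨u, [], p, r, (List.append_nil u).symm, rfl, hy.atRight hp, hr, rfl⟩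
      | cons a v =>
        rw [step_inl_append, Option.map_eq_some_iff] at hc
        obtain ⟨r, hr, rfl⟩ := hc
        exact ⟨u ++ [a], v, y, by simp, by simp, hy, by simp [sweepRight_concat, hp, hr]⟩
  · obtain ⟨u, v, z, r, rfl, rfl, hz, hr, hq⟩ := h
    cases u using List.reverseRecOn with
    | nil =>
      rw [List.length_nil, step_inr_zero, Option.map_eq_some_iff] at hc
      obtain ⟨y, hy, rfl⟩ := hc
      exact LeavesLeft.visited (Or.inr ⟨z, r, q, hz, hr, hq, hy⟩)
    | append_singleton u a =>
      rw [List.append_assoc, List.singleton_append] at hc hz ⊢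
      rw [List.length_append, List.length_singleton, step_inr_append,
        Option.map_eq_some_iff] at hc
      obtain ⟨x, hx, rfl⟩ := hc
      exact ⟨u, a :: v, z, r, rfl, rfl, hz, hr, by simp [sweepLeft_cons, hq, hx]⟩

theorem reach_right_iff {w : List A} {z : Pp} :
    M.Reach w (Sum.inl M.start, 0) (Sum.inl z, w.length + 1) ↔ M.AtRight w z := by
  constructor
  · intro h
    have hv : ∀ c, M.Reach w (Sum.inl M.start, 0) c → M.Visited w c := by
      intro c hc
      induction hc with
      | refl => exact (rfl : M.start = M.start)
      | tail _ hbc ih => exact ih.step hbc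
    obtain ⟨u, v, y, rfl, hlen, hy, hp⟩ := hv _ h
    obtain rfl : v = [] := by simpa using hlen
    rw [List.append_nil] at hy ⊢
    exact hy.atRight hp
  · rintro ⟨y, p, hy, hp, hz⟩
    induction hz with
    | refl => exact reach_of_startT hy hp
    | tail _ hxz ih =>
      obtain ⟨q, hq, hqz⟩ := hxz
      exact ih.trans (reach_of_loop hq hqz)

theorem acceptsR_iff {F : Set Pp} {w : List A} :
    M.AcceptsR F w ↔ ∃ z ∈ F, M.turnR z = none ∧ M.AtRight w z := by
  simp only [AcceptsR, ← reach_right_iff, ← exists_steps_eq_some_iff, step_inl_end,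
    Option.map_eq_none_iff]
  constructor
  · rintro ⟨n, z, h1, h2, h3⟩
    exact ⟨z, h2, h3, n, h1⟩
  · rintro ⟨z, h2, h3, n, h1⟩
    exact ⟨n, z, h1, h2, h3⟩

/-- The complete behaviour of the automaton on `w` is linked to the part of its behaviour at the
left end-marker that can be extended along `w`. -/
theorem exists_linked_loop {w : List A} {y p : Pp} (hy : M.startT = some y)
    (hp : M.sweepRight w y = some p) :
    ∃ s t : GoodState Pp Pm, M.Linked w s t ∧ s.1.1 = y ∧
      (∀ q r, s.1.2 q = some r → M.turnL q = some r) ∧ t.1 = (p, M.loop w) := by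
  let f : Pm → Option Pp := fun x =>
    if ∃ q z, M.sweepLeft w q = some x ∧ M.loop w q = some z then M.turnL x else none
  have hf : ∀ x r, f x = some r → (∃ q z, M.sweepLeft w q = some x ∧ M.loop w q = some z) ∧
      M.turnL x = some r := by
    intro x r h
    simp only [f] at h
    split_ifs at h with hx
    exact ⟨hx, h⟩
  refine ⟨⟨(y, f), ?_, ?_⟩, ⟨(p, M.loop w), ?_, ?_⟩, ⟨hp, ?_, ?_⟩, rfl,
    fun q r h => (hf q r h).2, rfl⟩
  · intro q q' r h h'
    exact M.injL q q' r (hf q r h).2 (hf q' r h').2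
  · intro q h
    exact M.startT_ne_turnL q y hy (hf q y h).2
  · intro q q' r h h'
    obtain ⟨x, z, h1, h2, h3⟩ := M.loop_eq_some_iff.1 h
    obtain ⟨x', z', h1', h2', h3'⟩ := M.loop_eq_some_iff.1 h'
    obtain rfl := M.sweepRight_injective w _ _ _ h3 h3'
    obtain rfl := M.injL _ _ _ h2 h2'
    exact M.sweepLeft_injective w _ _ _ h1 h1'
  · intro q h
    obtain ⟨x, z, h1, h2, h3⟩ := M.loop_eq_some_iff.1 h
    obtain rfl := M.sweepRight_injective w _ _ _ h3 hp
    exact M.startT_ne_turnL x _ hy h2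
  · intro x r h
    obtain ⟨⟨q, z, hq, hz⟩, hr⟩ := hf x r h
    obtain ⟨x', r', h1, h2, h3⟩ := M.loop_eq_some_iff.1 hz
    obtain rfl : x = x' := by simpa [hq] using h1
    obtain rfl : r = r' := by simpa [hr] using h2
    exact ⟨q, z, hq, h3, hz⟩
  · intro q z h
    obtain ⟨x, r, h1, h2, h3⟩ := M.loop_eq_some_iff.1 h
    exact ⟨x, r, h1, h3, (if_pos ⟨q, z, h1, h⟩).trans h2⟩

variable (M)

theorem toMRFA_language (F : Set Pp) : (M.toMRFA F).Language = M.LangR F := by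
  ext w
  change (∃ s ∈ (M.toMRFA F).init, ∃ t ∈ (M.toMRFA F).accept,
    runP (M.toMRFA F).next s w = some t) ↔ M.AcceptsR F w
  simp only [runP_toMRFA_eq_some_iff, acceptsR_iff]
  constructor
  · rintro ⟨s, ⟨hs, hsf⟩, t, ⟨z, hzF, hz, hzt⟩, hst⟩
    refine ⟨z, hzF, hz, s.1.1, t.1.1, hs, hst.1, ?_⟩
    refine Relation.ReflTransGen.mono ?_ _ _ hzt
    rintro x y ⟨q, hq, hqy⟩
    obtain ⟨a, b, h1, h2, h3⟩ := hst.2.2 q y hqy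
    exact ⟨q, hq, M.loop_eq_some_iff.2 ⟨a, b, h1, hsf a b h3, h2⟩⟩
  · rintro ⟨z, hzF, hz, y, p, hy, hp, hpz⟩
    obtain ⟨s, t, hst, rfl, hs, ht⟩ := exists_linked_loop hy hp
    exact ⟨s, ⟨hy, hs⟩, t, ⟨z, hzF, hz, by rw [ht]; exact hpz⟩, hst⟩

end SRFA

/-- every sRFA with state sets `P₊`, `P₋` can be transformed to an
MRFA with the set of states `{(p, f) : p ∈ P₊, f : P₋ ⇀ P₊ partial injective,
p ∉ Im f}` recognizing the same language. -/
theorem stmt10 (A Pp Pm : Type) [Fintype Pp] [Fintype Pm]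
    (M : SRFA A Pp Pm) (F : Set Pp) :
    ∃ N : MRFA A (GoodState Pp Pm), N.Language = M.LangR F :=
  ⟨M.toMRFA F, M.toMRFA_language F⟩
end
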